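/- For the quantized torus product, with f(θ₁,φ₁) = exp(iφ₁) and g(θ₂,φ₂) = exp(iθ₂), the limit defining (f ⋆_ℏ g)(θ,φ) exists for every (θ,φ) ∈ ℝ² and every ℏ > 0, and equals exp(−iℏ)·exp(iθ)·exp(iφ); consequently the two exponential generators satisfy the noncommutative torus relation (e^{iθ} ⋆_ℏ e^{iφ}) = exp(2iℏ)·(e^{iφ} ⋆_ℏ e^{iθ}). -/

import Mathlib

/-!
For plane waves the phase of the torus product splits into a part in `(θ₁, φ₂)` and a part in
`(φ₁, θ₂)`, each of the form `c (x - s) (y - t)` up to constants. The integral of `exp (i c x y)`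
over the square `[-N, N]²` is a Dirichlet integral and tends to `2π / |c|`; moving the square by
a fixed vector changes it only on strips of bounded width where `|x| ≥ N - |s|`, and there the
inner integral is at most `2 / |c x|`. Hence the saddle points do not affect the limit, the two
factors `2π|ℏ|` cancel the normalization, and only the constant phase remains.
-/

open MeasureTheory Complex Filter

/-- The torus kernel at base point `m = (θ,φ)`, on `a = (θ₁,φ₁)`, `b = (θ₂,φ₂)`:
`exp((i/ℏ)·[(θ−θ₂)(φ−φ₁) − (φ−φ₂)(θ−θ₁)])`. -/
noncomputable def torusKernel (ℏ : ℝ) (m a b : ℝ × ℝ) : ℂ :=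
  Complex.exp (Complex.I / ℏ *
    (((m.1 - b.1) * (m.2 - a.2) - (m.2 - b.2) * (m.1 - a.1) : ℝ) : ℂ))

/-- The truncated torus product `T_n(f,g)(θ,φ)`, integrating over the box `[−2πn, 2πn]⁴`. -/
noncomputable def torusT (ℏ : ℝ) (f g : ℝ × ℝ → ℂ) (n : ℕ) (m : ℝ × ℝ) : ℂ :=
  ((2 * Real.pi * ℏ) ^ 2 : ℝ)⁻¹ •
    ∫ ab in Set.Icc (-(2 * Real.pi * n), -(2 * Real.pi * n)) (2 * Real.pi * n, 2 * Real.pi * n)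
        ×ˢ Set.Icc (-(2 * Real.pi * n), -(2 * Real.pi * n)) (2 * Real.pi * n, 2 * Real.pi * n),
      f ab.1 * g ab.2 * torusKernel ℏ m ab.1 ab.2

open scoped Topology Real

section DirichletIntegral

theorem integral_exp_neg_mul_Ioi {x : ℝ} (hx : 0 < x) :
    ∫ t in Set.Ioi (0 : ℝ), Real.exp (-x * t) = x⁻¹ := by
  rw [integral_exp_mul_Ioi (neg_neg_of_pos hx) 0, mul_zero, Real.exp_zero, div_neg, neg_div,
    neg_neg, one_div]

theorem integral_exp_neg_mul_mul_sin (A t : ℝ) :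
    ∫ x in (0 : ℝ)..A, Real.exp (-x * t) * Real.sin x =
      (1 + t ^ 2)⁻¹ - Real.exp (-A * t) * ((Real.cos A + t * Real.sin A) * (1 + t ^ 2)⁻¹) := by
  have hderiv (x : ℝ) : HasDerivAt
      (fun x ↦ -(Real.exp (-x * t) * ((Real.cos x + t * Real.sin x) * (1 + t ^ 2)⁻¹)))
      (Real.exp (-x * t) * Real.sin x) x := by
    have hexp : HasDerivAt (fun x : ℝ ↦ Real.exp (-x * t)) (Real.exp (-x * t) * (-1 * t)) x :=
      ((hasDerivAt_id x).neg.mul_const t).exp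
    have htrig : HasDerivAt (fun x : ℝ ↦ Real.cos x + t * Real.sin x)
        (-Real.sin x + t * Real.cos x) x :=
      (Real.hasDerivAt_cos x).add ((Real.hasDerivAt_sin x).const_mul t)
    refine (hexp.mul (htrig.mul_const (1 + t ^ 2)⁻¹)).neg.congr_deriv ?_
    field_simp
    ring
  rw [intervalIntegral.integral_eq_sub_of_hasDerivAt (fun x _ ↦ hderiv x)
    (Continuous.intervalIntegrable (by fun_prop) _ _)]
  simp only [Real.cos_zero, Real.sin_zero, neg_zero, zero_mul, mul_zero, Real.exp_zero]
  ring

theorem integrable_exp_neg_mul_mul_sin (A : ℝ) :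
    Integrable (Function.uncurry fun x t : ℝ ↦ Real.exp (-x * t) * Real.sin x)
      ((volume.restrict (Set.Ioc 0 A)).prod (volume.restrict (Set.Ioi 0))) := by
  have hnorm {x : ℝ} (hx : 0 < x) :
      ∫ t in Set.Ioi (0 : ℝ), ‖Real.exp (-x * t) * Real.sin x‖ = |Real.sinc x| := by
    simp only [norm_mul, Real.norm_eq_abs, Real.abs_exp]
    rw [integral_mul_const, integral_exp_neg_mul_Ioi hx, Real.sinc_of_ne_zero hx.ne', abs_div,
      abs_of_pos hx, inv_mul_eq_div]
  rw [integrable_prod_iff (Continuous.aestronglyMeasurable (by fun_prop))]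
  constructor
  · filter_upwards [ae_restrict_mem measurableSet_Ioc] with x hx
    exact (exp_neg_integrableOn_Ioi 0 hx.1).mul_const (Real.sin x)
  · have hsinc : IntegrableOn (fun x ↦ |Real.sinc x|) (Set.Ioc 0 A) :=
      Real.continuous_sinc.abs.integrableOn_Ioc
    refine hsinc.congr ?_
    filter_upwards [ae_restrict_mem measurableSet_Ioc] with x hx
    exact (hnorm hx.1).symm

theorem integral_sinc_eq_integral_Ioi {A : ℝ} (hA : 0 ≤ A) :
    ∫ x in (0 : ℝ)..A, Real.sinc x =
      ∫ t in Set.Ioi (0 : ℝ), ∫ x in (0 : ℝ)..A, Real.exp (-x * t) * Real.sin x := by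
  simp only [intervalIntegral.integral_of_le hA]
  rw [← integral_integral_swap (integrable_exp_neg_mul_mul_sin A)]
  refine setIntegral_congr_fun measurableSet_Ioc fun x hx ↦ ?_
  rw [integral_mul_const, integral_exp_neg_mul_Ioi hx.1, Real.sinc_of_ne_zero hx.1.ne',
    inv_mul_eq_div]

theorem abs_cos_add_mul_sin_le (A t : ℝ) : |Real.cos A + t * Real.sin A| ≤ 1 + t ^ 2 := by
  have hsq : (Real.cos A + t * Real.sin A) ^ 2 ≤ 1 + t ^ 2 := by
    nlinarith [Real.sin_sq_add_cos_sq A, sq_nonneg (Real.sin A - t * Real.cos A)]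
  exact abs_le_of_sq_le_sq (by nlinarith [sq_nonneg t]) (by positivity)

theorem abs_integral_sinc_sub_pi_div_two_le {A : ℝ} (hA : 0 < A) :
    |(∫ x in (0 : ℝ)..A, Real.sinc x) - π / 2| ≤ A⁻¹ := by
  set remainder : ℝ → ℝ := fun t ↦
    Real.exp (-A * t) * ((Real.cos A + t * Real.sin A) * (1 + t ^ 2)⁻¹) with hremainder
  have hexp : IntegrableOn (fun t ↦ Real.exp (-A * t)) (Set.Ioi 0) :=
    exp_neg_integrableOn_Ioi 0 hA
  have hbound (t : ℝ) : ‖remainder t‖ ≤ Real.exp (-A * t) := by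
    rw [hremainder, norm_mul, norm_mul, norm_inv, Real.norm_of_nonneg (Real.exp_pos _).le,
      Real.norm_eq_abs, Real.norm_of_nonneg (by positivity : 0 ≤ 1 + t ^ 2)]
    exact mul_le_of_le_one_right (Real.exp_pos _).le
      (mul_inv_le_one_of_le₀ (abs_cos_add_mul_sin_le A t) (by positivity))
  have hint : IntegrableOn remainder (Set.Ioi 0) :=
    hexp.mono' (Measurable.aestronglyMeasurable (by fun_prop)) (ae_of_all _ hbound)
  have hsplit : ∫ x in (0 : ℝ)..A, Real.sinc x = π / 2 - ∫ t in Set.Ioi 0, remainder t := by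
    simp only [integral_sinc_eq_integral_Ioi hA.le, integral_exp_neg_mul_mul_sin]
    rw [integral_sub integrable_inv_one_add_sq.integrableOn hint, integral_Ioi_inv_one_add_sq,
      Real.arctan_zero, sub_zero]
  calc |(∫ x in (0 : ℝ)..A, Real.sinc x) - π / 2|
      = ‖∫ t in Set.Ioi 0, remainder t‖ := by
        rw [hsplit, sub_sub_cancel_left, abs_neg, Real.norm_eq_abs]
    _ ≤ ∫ t in Set.Ioi 0, Real.exp (-A * t) :=
        norm_integral_le_of_norm_le hexp (ae_of_all _ hbound)
    _ = A⁻¹ := integral_exp_neg_mul_Ioi hA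

theorem tendsto_integral_sinc_atTop :
    Tendsto (fun A : ℝ ↦ ∫ x in (0 : ℝ)..A, Real.sinc x) atTop (𝓝 (π / 2)) := by
  rw [tendsto_iff_norm_sub_tendsto_zero]
  refine squeeze_zero' (Eventually.of_forall fun _ ↦ norm_nonneg _) ?_ tendsto_inv_atTop_zero
  filter_upwards [eventually_gt_atTop 0] with A hA
  exact abs_integral_sinc_sub_pi_div_two_le hA

theorem tendsto_integral_sinc_symm :
    Tendsto (fun A : ℝ ↦ ∫ x in (-A)..A, Real.sinc x) atTop (𝓝 π) := by
  have hsymm (A : ℝ) : ∫ x in (-A)..A, Real.sinc x = 2 * ∫ x in (0 : ℝ)..A, Real.sinc x := by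
    have hreflect : ∫ x in (-A)..0, Real.sinc x = ∫ x in (0 : ℝ)..A, Real.sinc x := by
      simpa using (intervalIntegral.integral_comp_neg (a := 0) (b := A) Real.sinc).symm
    rw [← intervalIntegral.integral_add_adjacent_intervals
      (Real.continuous_sinc.intervalIntegrable (-A) 0)
      (Real.continuous_sinc.intervalIntegrable 0 A), hreflect, two_mul]
  simpa only [hsymm, mul_div_cancel₀ π (two_ne_zero' ℝ)] using
    tendsto_integral_sinc_atTop.const_mul 2

end DirichletIntegral

section IntervalShift

variable {E : Type*} [NormedAddCommGroup E] [NormedSpace ℝ E]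

theorem norm_intervalIntegral_le_of_abs_mul_norm_le {f : ℝ → E} {C r a b : ℝ} (hr : 0 < r)
    (hf : ∀ x, |x| * ‖f x‖ ≤ C) (hab : ∀ x ∈ Set.uIoc a b, r ≤ |x|) :
    ‖∫ x in a..b, f x‖ ≤ C / r * |b - a| := by
  refine intervalIntegral.norm_integral_le_of_norm_le_const fun x hx ↦ ?_
  rw [le_div_iff₀ hr, mul_comm]
  exact (mul_le_mul_of_nonneg_right (hab x hx) (norm_nonneg _)).trans (hf x)

theorem tendsto_intervalIntegral_shift {F : ℝ → ℝ → E} {C : ℝ} {L : E}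
    (hF : ∀ N, Continuous (F N)) (hC : ∀ N x, |x| * ‖F N x‖ ≤ C) (s : ℝ)
    (hL : Tendsto (fun N ↦ ∫ x in (-N)..N, F N x) atTop (𝓝 L)) :
    Tendsto (fun N ↦ ∫ x in (-N - s)..(N - s), F N x) atTop (𝓝 L) := by
  have hsplit (N : ℝ) : (∫ x in (-N - s)..(-N), F N x) + (∫ x in N..(N - s), F N x) =
      (∫ x in (-N - s)..(N - s), F N x) - ∫ x in (-N)..N, F N x := by
    have hint (a b : ℝ) : IntervalIntegrable (F N) volume a b := (hF N).intervalIntegrable a b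
    rw [← intervalIntegral.integral_add_adjacent_intervals (hint (-N - s) (-N)) (hint _ (N - s)),
      ← intervalIntegral.integral_add_adjacent_intervals (hint (-N) N) (hint N (N - s))]
    abel
  have hvanish : Tendsto (fun N : ℝ ↦ C / (N - |s|) * |s| + C / (N - |s|) * |s|) atTop (𝓝 0) := by
    have hden : Tendsto (fun N : ℝ ↦ N - |s|) atTop atTop :=
      tendsto_atTop_add_const_right atTop (-|s|) tendsto_id
    have hstrip := (hden.const_div_atTop C).mul_const |s|
    simpa using hstrip.add hstrip
  refine tendsto_of_tendsto_of_dist hL (squeeze_zero' (Eventually.of_forall fun _ ↦ dist_nonneg)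
    ?_ hvanish)
  filter_upwards [eventually_gt_atTop |s|] with N hN
  have hr : 0 < N - |s| := sub_pos.mpr hN
  have hs := neg_abs_le s
  have hs' := le_abs_self s
  rw [dist_comm, dist_eq_norm, ← hsplit]
  refine norm_add_le_of_le ?_ ?_
  · refine (norm_intervalIntegral_le_of_abs_mul_norm_le hr (hC N) fun x hx ↦ ?_).trans_eq
      (by congr 2; ring)
    refine le_abs.mpr (Or.inr ?_)
    rcases Set.mem_uIoc.mp hx with h | h <;> linarith [h.1, h.2]
  · refine (norm_intervalIntegral_le_of_abs_mul_norm_le hr (hC N) fun x hx ↦ ?_).trans_eq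
      (by rw [sub_sub_cancel_left, abs_neg])
    refine le_abs.mpr (Or.inl ?_)
    rcases Set.mem_uIoc.mp hx with h | h <;> linarith [h.1, h.2]

end IntervalShift

section SaddleIntegral

theorem continuous_intervalIntegral_cexp_mul_I (a b : ℝ) :
    Continuous fun w : ℝ ↦ ∫ y in a..b, cexp ((w * y : ℝ) * I) :=
  intervalIntegral.continuous_parametric_intervalIntegral_of_continuous'
    (by simp only [Function.uncurry_def]; fun_prop) a b

theorem abs_mul_norm_intervalIntegral_cexp_mul_I_le (w a b : ℝ) :
    |w| * ‖∫ y in a..b, cexp ((w * y : ℝ) * I)‖ ≤ 2 := by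
  rw [← Real.norm_eq_abs, ← norm_smul,
    intervalIntegral.smul_integral_comp_mul_left (fun y : ℝ ↦ cexp (y * I))]
  simp only [mul_comm _ I]
  rw [integral_exp_mul_complex I_ne_zero, norm_div, norm_I, div_one]
  refine (norm_sub_le _ _).trans_eq ?_
  rw [norm_exp_I_mul_ofReal, norm_exp_I_mul_ofReal, one_add_one_eq_two]

theorem intervalIntegral_cexp_mul_I_symm (w N : ℝ) :
    ∫ y in (-N)..N, cexp ((w * y : ℝ) * I) = (2 * N * Real.sinc (w * N) : ℝ) := by
  rcases eq_or_ne w 0 with rfl | hw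
  · simp [two_mul]
  · rw [intervalIntegral.integral_comp_mul_left (fun y : ℝ ↦ cexp (y * I)) hw, mul_neg,
      integral_exp_mul_I_eq_sinc, real_smul]
    have hw' : (w : ℂ) ≠ 0 := ofReal_ne_zero.mpr hw
    push_cast
    field_simp

theorem tendsto_integral_cexp_mul_I_square {c : ℝ} (hc : c ≠ 0) :
    Tendsto (fun N : ℝ ↦ ∫ x in (-N)..N, ∫ y in (-N)..N, cexp ((c * x * y : ℝ) * I)) atTop
      (𝓝 (2 * π / |c| : ℝ)) := by
  have hscale (N : ℝ) : ∫ x in (-N)..N, ∫ y in (-N)..N, cexp ((c * x * y : ℝ) * I) =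
      (2 / |c| * ∫ u in (-(|c| * N * N))..(|c| * N * N), Real.sinc u : ℝ) := by
    have habs (x : ℝ) : Real.sinc (c * x * N) = Real.sinc (|c| * N * x) := by
      rcases abs_choice c with h | h <;> rw [h, mul_right_comm]
      rw [neg_mul, neg_mul, Real.sinc_neg]
    have hc' : |c| ≠ 0 := abs_ne_zero.mpr hc
    simp only [intervalIntegral_cexp_mul_I_symm, habs]
    rw [intervalIntegral.integral_ofReal, intervalIntegral.integral_const_mul, ← mul_neg,
      ← intervalIntegral.mul_integral_comp_mul_left]
    congr 1
    field_simp
  have hN : Tendsto (fun N : ℝ ↦ |c| * N * N) atTop atTop :=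
    (tendsto_id.const_mul_atTop (abs_pos.mpr hc)).atTop_mul_atTop₀ tendsto_id
  simp only [hscale, mul_div_right_comm 2 π]
  exact ((tendsto_integral_sinc_symm.comp hN).const_mul _).ofReal

theorem intervalIntegral_swap_of_continuous {E : Type*} [NormedAddCommGroup E] [NormedSpace ℝ E]
    {F : ℝ → ℝ → E} (hF : Continuous F.uncurry) (a b a' b' : ℝ) :
    ∫ x in a..b, ∫ y in a'..b', F x y = ∫ y in a'..b', ∫ x in a..b, F x y :=
  intervalIntegral_intervalIntegral_swap <|
    (hF.continuousOn.integrableOn_compact (isCompact_uIcc.prod isCompact_uIcc)).mono_set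
      (Set.prod_mono Set.uIoc_subset_uIcc Set.uIoc_subset_uIcc)

/-- The integral over the square `[-N, N]²` of the oscillating exponential whose phase
`c (x - s) (y - t)` has a saddle point at `(s, t)`. -/
noncomputable def saddleIntegral (c s t N : ℝ) : ℂ :=
  ∫ x in (-N)..N, ∫ y in (-N)..N, cexp ((c * (x - s) * (y - t) : ℝ) * I)

theorem saddleIntegral_eq_integral_shift (c s t N : ℝ) :
    saddleIntegral c s t N =
      ∫ x in (-N - s)..(N - s), ∫ y in (-N - t)..(N - t), cexp ((c * x * y : ℝ) * I) := by
  rw [← intervalIntegral.integral_comp_sub_right _ s]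
  refine intervalIntegral.integral_congr fun x _ ↦ ?_
  exact intervalIntegral.integral_comp_sub_right
    (fun y ↦ cexp ((c * (x - s) * y : ℝ) * I)) t

theorem tendsto_saddleIntegral {c : ℝ} (hc : c ≠ 0) (s t : ℝ) :
    Tendsto (saddleIntegral c s t) atTop (𝓝 (2 * π / |c| : ℝ)) := by
  have hcont (a b : ℝ) : Continuous fun x : ℝ ↦ ∫ y in a..b, cexp ((c * x * y : ℝ) * I) :=
    (continuous_intervalIntegral_cexp_mul_I a b).comp (continuous_const_mul c)
  have hbound (a b x : ℝ) : |x| * ‖∫ y in a..b, cexp ((c * x * y : ℝ) * I)‖ ≤ 2 / |c| := by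
    rw [le_div_iff₀' (abs_pos.mpr hc), ← mul_assoc, ← abs_mul]
    exact abs_mul_norm_intervalIntegral_cexp_mul_I_le (c * x) a b
  have hswap (a b a' b' : ℝ) : ∫ x in a..b, ∫ y in a'..b', cexp ((c * x * y : ℝ) * I) =
      ∫ x in a'..b', ∫ y in a..b, cexp ((c * x * y : ℝ) * I) := by
    rw [intervalIntegral_swap_of_continuous (by simp only [Function.uncurry_def]; fun_prop)]
    simp only [mul_right_comm c]
  have hshift := tendsto_intervalIntegral_shift (fun N ↦ hcont (-N) N)
    (fun N ↦ hbound (-N) N) t (tendsto_integral_cexp_mul_I_square hc)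
  simp only [hswap (_ - t)] at hshift
  exact (tendsto_intervalIntegral_shift (fun N ↦ hcont (-N - t) (N - t))
    (fun N ↦ hbound (-N - t) (N - t)) s hshift).congr
      fun N ↦ (saddleIntegral_eq_integral_shift c s t N).symm

end SaddleIntegral

section TorusProduct

theorem integral_prod_prod_mul {α β γ δ : Type*} [MeasurableSpace α] [MeasurableSpace β]
    [MeasurableSpace γ] [MeasurableSpace δ] {μ : Measure α} {ν : Measure β} {ρ : Measure γ}
    {σ : Measure δ} [SFinite μ] [SFinite ν] [SFinite ρ] [SFinite σ] {𝕜 : Type*} [RCLike 𝕜]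
    {F : α → δ → 𝕜} {G : β → γ → 𝕜}
    (hFG : Integrable (fun p : (α × β) × γ × δ ↦ F p.1.1 p.2.2 * G p.1.2 p.2.1)
      ((μ.prod ν).prod (ρ.prod σ))) :
    ∫ p, F p.1.1 p.2.2 * G p.1.2 p.2.1 ∂(μ.prod ν).prod (ρ.prod σ) =
      (∫ x, ∫ y, F x y ∂σ ∂μ) * ∫ x, ∫ y, G x y ∂ρ ∂ν := by
  have hinner (a : α × β) : ∫ b, F a.1 b.2 * G a.2 b.1 ∂ρ.prod σ =
      (∫ y, F a.1 y ∂σ) * ∫ y, G a.2 y ∂ρ := by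
    simp only [mul_comm (F a.1 _)]
    rw [integral_prod_mul, mul_comm]
  rw [integral_prod _ hFG]
  simp only [hinner]
  exact integral_prod_mul (fun x ↦ ∫ y, F x y ∂σ) (fun x ↦ ∫ y, G x y ∂ρ)

theorem setIntegral_box_mul {𝕜 : Type*} [RCLike 𝕜] {F G : ℝ → ℝ → 𝕜} (hF : Continuous F.uncurry)
    (hG : Continuous G.uncurry) {a b a' b' : ℝ × ℝ} (hab : a ≤ b) (hab' : a' ≤ b') :
    ∫ p in Set.Icc a b ×ˢ Set.Icc a' b', F p.1.1 p.2.2 * G p.1.2 p.2.1 =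
      (∫ x in a.1..b.1, ∫ y in a'.2..b'.2, F x y) *
        ∫ x in a.2..b.2, ∫ y in a'.1..b'.1, G x y := by
  have hcont : Continuous fun p : (ℝ × ℝ) × ℝ × ℝ ↦ F p.1.1 p.2.2 * G p.1.2 p.2.1 :=
    (hF.comp (f := fun p : (ℝ × ℝ) × ℝ × ℝ ↦ (p.1.1, p.2.2)) (by fun_prop)).mul
      (hG.comp (f := fun p : (ℝ × ℝ) × ℝ × ℝ ↦ (p.1.2, p.2.1)) (by fun_prop))
  have hint : IntegrableOn (fun p : (ℝ × ℝ) × ℝ × ℝ ↦ F p.1.1 p.2.2 * G p.1.2 p.2.1)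
      (Set.Icc a b ×ˢ Set.Icc a' b') :=
    hcont.continuousOn.integrableOn_compact (isCompact_Icc.prod isCompact_Icc)
  simp only [intervalIntegral.integral_of_le hab.1, intervalIntegral.integral_of_le hab.2,
    intervalIntegral.integral_of_le hab'.1, intervalIntegral.integral_of_le hab'.2,
    ← integral_Icc_eq_integral_Ioc]
  simp only [IntegrableOn, Set.Icc_prod_eq, Measure.volume_eq_prod,
    ← Measure.prod_restrict] at hint ⊢
  exact integral_prod_prod_mul hint

/-- The exponential `exp (i (k₁ θ + k₂ φ))` with frequency vector `k`; the generators of the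
torus are the cases `k = (1, 0)` and `k = (0, 1)`. -/
noncomputable def planeWave (k m : ℝ × ℝ) : ℂ :=
  cexp (I * (k.1 * m.1 + k.2 * m.2 : ℝ))

/-- The product of two plane waves at `m` predicted by the star product: the pointwise product
times a phase given by the symplectic form `k₁ l₂ - k₂ l₁`. -/
noncomputable def twistedProduct (ℏ : ℝ) (k l m : ℝ × ℝ) : ℂ :=
  cexp (I * ℏ * (k.1 * l.2 - k.2 * l.1 : ℝ)) * planeWave k m * planeWave l m

theorem planeWave_one_zero : planeWave (1, 0) = fun p ↦ cexp (I * p.1) := by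
  simp [planeWave, funext_iff]

theorem planeWave_zero_one : planeWave (0, 1) = fun p ↦ cexp (I * p.2) := by
  simp [planeWave, funext_iff]

-- Completing the product in each bilinear part of the phase absorbs the linear terms of the plane
-- waves by moving the saddle points.
theorem planeWave_mul_planeWave_mul_torusKernel {ℏ : ℝ} (hℏ : ℏ ≠ 0) (k l m a b : ℝ × ℝ) :
    planeWave k a * planeWave l b * torusKernel ℏ m a b =
      twistedProduct ℏ k l m *
        (cexp ((-ℏ⁻¹ * (a.1 - (m.1 + ℏ * l.2)) * (b.2 - (m.2 + ℏ * k.1)) : ℝ) * I) *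
          cexp ((ℏ⁻¹ * (a.2 - (m.2 - ℏ * l.1)) * (b.1 - (m.1 - ℏ * k.2)) : ℝ) * I)) := by
  have hℏ' : (ℏ : ℂ) ≠ 0 := ofReal_ne_zero.mpr hℏ
  simp only [planeWave, torusKernel, twistedProduct, ← Complex.exp_add]
  congr 1
  push_cast
  field_simp
  ring

theorem torusT_planeWave {ℏ : ℝ} (hℏ : ℏ ≠ 0) (k l m : ℝ × ℝ) (n : ℕ) :
    torusT ℏ (planeWave k) (planeWave l) n m = ((2 * π * ℏ) ^ 2 : ℝ)⁻¹ •
      (twistedProduct ℏ k l m *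
        (saddleIntegral (-ℏ⁻¹) (m.1 + ℏ * l.2) (m.2 + ℏ * k.1) (2 * π * n) *
          saddleIntegral ℏ⁻¹ (m.2 - ℏ * l.1) (m.1 - ℏ * k.2) (2 * π * n))) := by
  have hcont (c s t : ℝ) : Continuous
      (Function.uncurry fun x y : ℝ ↦ cexp ((c * (x - s) * (y - t) : ℝ) * I)) := by
    simp only [Function.uncurry_def]
    fun_prop
  have hbox : -(2 * π * (n : ℝ)) ≤ 2 * π * n := neg_le_self (by positivity)
  simp only [torusT, planeWave_mul_planeWave_mul_torusKernel hℏ, saddleIntegral]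
  rw [integral_const_mul, setIntegral_box_mul (hcont _ _ _) (hcont _ _ _) ⟨hbox, hbox⟩
    ⟨hbox, hbox⟩]

theorem tendsto_torusT_planeWave {ℏ : ℝ} (hℏ : ℏ ≠ 0) (k l m : ℝ × ℝ) :
    Tendsto (fun n ↦ torusT ℏ (planeWave k) (planeWave l) n m) atTop
      (𝓝 (twistedProduct ℏ k l m)) := by
  have hN : Tendsto (fun n : ℕ ↦ 2 * π * (n : ℝ)) atTop atTop :=
    tendsto_natCast_atTop_atTop.const_mul_atTop (by positivity)
  have hsaddle {c : ℝ} (hc : c ≠ 0) (s t : ℝ) :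
      Tendsto (fun n : ℕ ↦ saddleIntegral c s t (2 * π * n)) atTop (𝓝 (2 * π / |c| : ℝ)) :=
    (tendsto_saddleIntegral hc s t).comp hN
  have hlim := (((hsaddle (neg_ne_zero.mpr (inv_ne_zero hℏ)) (m.1 + ℏ * l.2) (m.2 + ℏ * k.1)).mul
    (hsaddle (inv_ne_zero hℏ) (m.2 - ℏ * l.1) (m.1 - ℏ * k.2))).const_mul
      (twistedProduct ℏ k l m)).const_smul ((2 * π * ℏ) ^ 2 : ℝ)⁻¹
  have hnormalization : ((2 * π * ℏ) ^ 2)⁻¹ * (2 * π / |-ℏ⁻¹| * (2 * π / |ℏ⁻¹|)) = 1 := by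
    rw [abs_neg, div_mul_div_comm, abs_mul_abs_self]
    field_simp
  rw [mul_comm (twistedProduct ℏ k l m), ← ofReal_mul, real_smul, ← mul_assoc, ← ofReal_mul,
    hnormalization, ofReal_one, one_mul] at hlim
  simpa only [torusT_planeWave hℏ] using hlim

theorem twistedProduct_swap (ℏ : ℝ) (k l m : ℝ × ℝ) :
    twistedProduct ℏ l k m =
      cexp (2 * I * ℏ * (l.1 * k.2 - l.2 * k.1 : ℝ)) * twistedProduct ℏ k l m := by
  simp only [twistedProduct, planeWave, ← Complex.exp_add]
  congr 1
  push_cast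
  ring

theorem torus_product_phi_theta_general {ℏ : ℝ} (hℏ : ℏ ≠ 0) (k l m : ℝ × ℝ) :
    Tendsto (fun n ↦ torusT ℏ (planeWave k) (planeWave l) n m) atTop
      (𝓝 (twistedProduct ℏ k l m)) ∧
    ∀ L₁ L₂ : ℂ,
      Tendsto (fun n ↦ torusT ℏ (planeWave l) (planeWave k) n m) atTop (𝓝 L₁) →
      Tendsto (fun n ↦ torusT ℏ (planeWave k) (planeWave l) n m) atTop (𝓝 L₂) →
      L₁ = cexp (2 * I * ℏ * (l.1 * k.2 - l.2 * k.1 : ℝ)) * L₂ := by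
  refine ⟨tendsto_torusT_planeWave hℏ k l m, fun L₁ L₂ h₁ h₂ ↦ ?_⟩
  rw [tendsto_nhds_unique h₁ (tendsto_torusT_planeWave hℏ l k m),
    tendsto_nhds_unique h₂ (tendsto_torusT_planeWave hℏ k l m), twistedProduct_swap]

end TorusProduct

/-- Quantized torus: with `f(θ₁,φ₁) = exp(iφ₁)` and `g(θ₂,φ₂) = exp(iθ₂)`, the limit
defining `(f ⋆_ℏ g)(θ,φ)` exists and equals `exp(−iℏ)·exp(iθ)·exp(iφ)`; consequently the
two exponential generators satisfy `e^{iθ} ⋆_ℏ e^{iφ} = exp(2iℏ)·(e^{iφ} ⋆_ℏ e^{iθ})`. -/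
theorem torus_product_phi_theta (ℏ : ℝ) (hℏ : 0 < ℏ) (θ φ : ℝ) :
    Tendsto (fun n : ℕ =>
        torusT ℏ (fun p => Complex.exp (Complex.I * (p.2 : ℂ)))
          (fun p => Complex.exp (Complex.I * (p.1 : ℂ))) n (θ, φ)) atTop
      (nhds (Complex.exp (-Complex.I * (ℏ : ℂ)) * Complex.exp (Complex.I * (θ : ℂ)) *
        Complex.exp (Complex.I * (φ : ℂ)))) ∧
    (∀ L₁ L₂ : ℂ,
      Tendsto (fun n : ℕ =>
          torusT ℏ (fun p => Complex.exp (Complex.I * (p.1 : ℂ)))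
            (fun p => Complex.exp (Complex.I * (p.2 : ℂ))) n (θ, φ)) atTop (nhds L₁) →
      Tendsto (fun n : ℕ =>
          torusT ℏ (fun p => Complex.exp (Complex.I * (p.2 : ℂ)))
            (fun p => Complex.exp (Complex.I * (p.1 : ℂ))) n (θ, φ)) atTop (nhds L₂) →
      L₁ = Complex.exp (2 * Complex.I * (ℏ : ℂ)) * L₂) := by
  simpa [planeWave_one_zero, planeWave_zero_one, twistedProduct, mul_right_comm] using
    torus_product_phi_theta_general hℏ.ne' (0, 1) (1, 0) (θ, φ)
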